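/- arXiv:2001.03077 — 2 statements merged into one kernel-verified Lean document; each statement's English description precedes it below -/
import Mathlib

section
/- Let p be a prime, A = (ℤ/pℤ)^r with r ≥ 2, and ℓ > 1 an integer with gcd(ℓ, p) = 1. For any Galois extension L/k of number fields with Gal(L/k) ≅ A, the order of the ℓ-torsion of the relative class group satisfies |Cl_{L/k}[ℓ]| = ∏_i |Cl_{K_i/k}[ℓ]|, where K_i ranges over all (p^r−1)/(p−1) subfields of L of degree p over k. -/
open NumberField

/-- The `ℓ`-torsion subgroup `G[ℓ] = {x : x^ℓ = 1}` of a commutative group. -/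
def lTors (G : Type*) [CommGroup G] (ℓ : ℕ) : Subgroup G where
  carrier := {x | x ^ ℓ = 1}
  one_mem' := one_pow ℓ
  mul_mem' := by
    intro a b ha hb
    simp only [Set.mem_setOf_eq] at *
    rw [mul_pow, ha, hb, mul_one]
  inv_mem' := by
    intro a ha
    simp only [Set.mem_setOf_eq] at *
    rw [inv_pow, ha, inv_one]

section aux

open scoped Pointwise nonZeroDivisors

namespace RelCl

theorem algebraMap_intNorm_eq_prod (K L Γ : Type) [Field K] [Field L] [NumberField K] [NumberField L]
    [Algebra K L] [Group Γ] [Fintype Γ] [MulSemiringAction Γ L] [IsGaloisGroup Γ K L] (x : 𝓞 L) :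
    algebraMap (𝓞 K) (𝓞 L) (Algebra.intNorm (𝓞 K) (𝓞 L) x) = ∏ g : Γ, g • x := by
  have : IsGalois K L := IsGaloisGroup.isGalois Γ K L
  apply FaithfulSMul.algebraMap_injective (𝓞 L) L
  rw [← IsScalarTower.algebraMap_apply, IsScalarTower.algebraMap_apply (𝓞 K) K L,
    Algebra.algebraMap_intNorm (L := L), Algebra.norm_eq_prod_automorphisms, map_prod]
  rw [← (IsGaloisGroup.mulEquivAlgEquiv Γ K L).toEquiv.prod_comp]
  refine Finset.prod_congr rfl fun g _ => ?_
  simp [algebraMap.coe_smul']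

theorem map_relNorm_eq_prod (K L Γ : Type) [Field K] [Field L] [NumberField K] [NumberField L]
    [Algebra K L] [Group Γ] [Fintype Γ] [MulSemiringAction Γ L] [IsGaloisGroup Γ K L]
    (I : Ideal (𝓞 L)) (hI : I ≠ ⊥) :
    (Ideal.relNorm (𝓞 K) I).map (algebraMap (𝓞 K) (𝓞 L)) = ∏ g : Γ, g • I := by
  have hcard : Nat.card Γ = Module.finrank (𝓞 K) (𝓞 L) := IsGaloisGroup.card_eq_finrank' Γ (𝓞 K) (𝓞 L)
  have hle : (Ideal.relNorm (𝓞 K) I).map (algebraMap (𝓞 K) (𝓞 L)) ≤ ∏ g : Γ, g • I := by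
    rw [Ideal.map_relNorm, Ideal.span_le]
    rintro _ ⟨x, hx, rfl⟩
    simp only [Function.comp_apply, algebraMap_intNorm_eq_prod K L Γ, SetLike.mem_coe]
    exact Ideal.prod_mem_prod fun g _ => Ideal.smul_mem_pointwise_smul g x I hx
  obtain ⟨J, hJ⟩ := Ideal.dvd_iff_le.mpr hle
  have h := congrArg (Ideal.relNorm (𝓞 K)) hJ
  rw [Ideal.relNorm_algebraMap, map_mul, map_prod] at h
  simp only [Ideal.relNorm_smul, Finset.prod_const, Finset.card_univ] at h
  rw [← hcard, Nat.card_eq_fintype_card] at h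
  have hne : (Ideal.relNorm (𝓞 K) I) ^ Fintype.card Γ ≠ 0 :=
    pow_ne_zero _ (by rw [Ne, Ideal.zero_eq_bot, Ideal.relNorm_eq_bot_iff]; exact hI)
  have h1 : Ideal.relNorm (𝓞 K) J = 1 := (mul_right_eq_self₀.mp h.symm).resolve_right hne
  have h2 : J = 1 := by
    have := Ideal.relNorm_le_comap (𝓞 K) J
    rw [h1, Ideal.one_eq_top, top_le_iff, Ideal.comap_eq_top_iff] at this
    rw [this, Ideal.one_eq_top]
  rw [hJ, h2, mul_one]

section act
variable {S Γ : Type} [CommRing S] [IsDedekindDomain S] [Group Γ] [MulSemiringAction Γ S]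

theorem smul_mem_nzd (g : Γ) (I : (Ideal S)⁰) : g • (I : Ideal S) ∈ (Ideal S)⁰ := by
  rw [mem_nonZeroDivisors_iff_ne_zero]
  intro h
  apply nonZeroDivisors.ne_zero I.2
  have := congrArg (g⁻¹ • ·) h
  simpa using this

/-- action on nonzero ideals -/
def smulI (g : Γ) : (Ideal S)⁰ →* (Ideal S)⁰ where
  toFun I := ⟨g • (I : Ideal S), smul_mem_nzd g I⟩
  map_one' := by ext1; exact smul_one g
  map_mul' I J := by ext1; simp [smul_mul']

theorem smul_span_singleton (g : Γ) (x : S) : g • Ideal.span {x} = Ideal.span {g • x} := by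
  rw [Ideal.pointwise_smul_def, Ideal.map_span]; simp

theorem smulI_wd (g : Γ) {I J : (Ideal S)⁰} (h : ClassGroup.mk0 I = ClassGroup.mk0 J) :
    ClassGroup.mk0 (smulI g I) = ClassGroup.mk0 (smulI g J) := by
  rw [ClassGroup.mk0_eq_mk0_iff] at h ⊢
  obtain ⟨x, y, hx, hy, h⟩ := h
  refine ⟨g • x, g • y, (smul_ne_zero_iff_ne g).mpr hx, (smul_ne_zero_iff_ne g).mpr hy, ?_⟩
  have := congrArg (g • ·) h
  simp only [smul_mul', smul_span_singleton] at this
  exact this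

/-- Galois action on the class group. -/
noncomputable def cact (g : Γ) : ClassGroup S →* ClassGroup S where
  toFun x := ClassGroup.mk0 (smulI g (ClassGroup.mk0_surjective x).choose)
  map_one' := by
    have : ClassGroup.mk0 (smulI g (1 : (Ideal S)⁰)) = 1 := by rw [map_one, map_one]
    refine Eq.trans ?_ this
    apply smulI_wd
    rw [(ClassGroup.mk0_surjective _).choose_spec, map_one]
  map_mul' x y := by
    rw [← map_mul, ← map_mul]
    apply smulI_wd
    rw [map_mul]
    simp only [(ClassGroup.mk0_surjective _).choose_spec]

theorem cact_mk0 (g : Γ) (I : (Ideal S)⁰) :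
    cact g (ClassGroup.mk0 I) = ClassGroup.mk0 (smulI g I) := by
  apply smulI_wd
  rw [(ClassGroup.mk0_surjective _).choose_spec]

theorem cact_one (x : ClassGroup S) : cact (1 : Γ) x = x := by
  obtain ⟨I, rfl⟩ := ClassGroup.mk0_surjective x
  rw [cact_mk0]; congr 1; ext1; simp [smulI]

theorem cact_mul (g h : Γ) (x : ClassGroup S) : cact (g * h) x = cact g (cact h x) := by
  obtain ⟨I, rfl⟩ := ClassGroup.mk0_surjective x
  rw [cact_mk0, cact_mk0, cact_mk0]; congr 1; ext1; simp [smulI, mul_smul]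

end act

/-- nonzero relNorm -/
theorem relNorm_nzd {R S : Type} [CommRing R] [CommRing S] [IsDedekindDomain R] [IsDedekindDomain S]
    [Algebra R S] [Module.Finite R S] [Module.IsTorsionFree R S] (I : (Ideal S)⁰) :
    Ideal.relNorm R (I : Ideal S) ∈ (Ideal R)⁰ := by
  rw [mem_nonZeroDivisors_iff_ne_zero, Ne, Ideal.zero_eq_bot, Ideal.relNorm_eq_bot_iff]
  exact nonZeroDivisors.ne_zero I.2

theorem ext_relNorm (K L Γ : Type) [Field K] [Field L] [NumberField K] [NumberField L]
    [Algebra K L] [Group Γ] [Fintype Γ] [MulSemiringAction Γ L] [IsGaloisGroup Γ K L]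
    (I : (Ideal (𝓞 L))⁰) :
    ClassGroup.extendedHom (𝓞 K) (𝓞 L) (ClassGroup.mk0 ⟨Ideal.relNorm (𝓞 K) (I : Ideal (𝓞 L)), relNorm_nzd I⟩)
      = ∏ g : Γ, cact g (ClassGroup.mk0 I) := by
  rw [ClassGroup.extendedHom_mk0]
  simp_rw [cact_mk0]
  rw [← map_prod]
  congr 1
  ext1
  simp only
  rw [map_relNorm_eq_prod K L Γ _ (nonZeroDivisors.ne_zero I.2), Submonoid.coe_finsetProd]
  rfl

theorem ext_inj (R S : Type) [CommRing R] [CommRing S] [IsDedekindDomain R] [IsDedekindDomain S]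
    [Algebra R S] [Module.Finite R S] [Module.IsTorsionFree R S] (x : ClassGroup R)
    (h : ClassGroup.extendedHom R S x = 1) : x ^ Module.finrank R S = 1 := by
  obtain ⟨I, rfl⟩ := ClassGroup.mk0_surjective x
  have h' : Submodule.IsPrincipal ((I : Ideal R).map (algebraMap R S)) := by
    rw [ClassGroup.extendedHom_mk0] at h
    exact (ClassGroup.mk0_eq_one_iff _).mp h
  clear h
  have key : Submodule.IsPrincipal ((I : Ideal R) ^ Module.finrank R S) := by
    obtain ⟨a, ha⟩ := h'.principal
    have := congrArg (Ideal.relNorm R) ha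
    rw [Ideal.submodule_span_eq, Ideal.relNorm_algebraMap, Ideal.relNorm_singleton] at this
    exact ⟨⟨Algebra.intNorm R S a, this⟩⟩
  have hm : ClassGroup.mk0 (I ^ Module.finrank R S) = 1 :=
    (ClassGroup.mk0_eq_one_iff (I ^ Module.finrank R S).2).mpr key
  rw [map_pow] at hm
  exact hm

theorem ext_act (K L Γ : Type) [Field K] [Field L] [NumberField K] [NumberField L]
    [Algebra K L] [Group Γ] [Finite Γ] [MulSemiringAction Γ L] [IsGaloisGroup Γ K L]
    (g : Γ) (x : ClassGroup (𝓞 K)) :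
    cact g (ClassGroup.extendedHom (𝓞 K) (𝓞 L) x) = ClassGroup.extendedHom (𝓞 K) (𝓞 L) x := by
  obtain ⟨I, rfl⟩ := ClassGroup.mk0_surjective x
  have : SMulCommClass Γ (𝓞 K) (𝓞 L) := IsGaloisGroup.commutes
  rw [ClassGroup.extendedHom_mk0, cact_mk0]
  congr 1
  ext1
  simp only [smulI, MonoidHom.coe_mk, OneHom.coe_mk]
  rw [Ideal.pointwise_smul_def, Ideal.map_map]
  congr 1
  ext1 a
  simp

end RelCl

namespace RelCl

theorem eq_one_of_pows {C : Type} [CommGroup C] {n l : ℕ} (h : n.Coprime l) {x : C}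
    (h1 : x ^ n = 1) (h2 : x ^ l = 1) : x = 1 := by
  have := Nat.dvd_gcd (orderOf_dvd_of_pow_eq_one h1) (orderOf_dvd_of_pow_eq_one h2)
  rw [h] at this
  simpa using this

theorem exists_inv_pow {n l : ℕ} (hl : 1 < l) (h : n.Coprime l) :
    ∃ m : ℕ, ∀ (C : Type) [CommGroup C] (x : C), x ^ l = 1 → x ^ (n * m) = x := by
  obtain ⟨m, hm⟩ := Nat.exists_mul_mod_eq_one_of_coprime h hl
  refine ⟨m, fun C _ x hx => ?_⟩
  rw [← Nat.div_add_mod (n * m) l, hm.2, pow_add, pow_mul, hx]; simp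

section count
variable (p r : ℕ) [hp : Fact p.Prime]

/-- the homomorphism attached to a vector `a` -/
noncomputable def dotHom (a : Fin r → ZMod p) : (Fin r → ZMod p) →+ ZMod p where
  toFun v := a ⬝ᵥ v
  map_zero' := by simp
  map_add' := by simp [dotProduct_add]

theorem exists_dotHom (f : (Fin r → ZMod p) →+ ZMod p) : ∃ a, f = dotHom p r a := by
  refine ⟨fun i => f (Pi.single i 1), ?_⟩
  refine AddMonoidHom.ext fun v => ?_
  have h := (f.toZModLinearMap p).pi_apply_eq_sum_univ v
  simp only [AddMonoidHom.coe_toZModLinearMap] at h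
  rw [h]
  simp only [dotHom, AddMonoidHom.coe_mk, ZeroHom.coe_mk, dotProduct, smul_eq_mul]
  refine Finset.sum_congr rfl fun i _ => ?_
  rw [mul_comm]; congr 2; ext j; simp [Pi.single_apply, eq_comm]

theorem card_dot (v : Fin r → ZMod p) (hv : v ≠ 0) :
    Nat.card {a : Fin r → ZMod p // a ⬝ᵥ v = 1} * p = p ^ r := by
  have hsurj : Function.Surjective (dotHom p r v) := by
    obtain ⟨i, hi⟩ := Function.ne_iff.mp hv
    intro c
    refine ⟨Pi.single i ((v i)⁻¹ * c), ?_⟩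
    have hi' : v i ≠ 0 := hi
    simp [dotHom, hi']
  obtain ⟨a0, ha0⟩ := hsurj 1
  have e : (dotHom p r v).ker ≃ {a : Fin r → ZMod p // a ⬝ᵥ v = 1} :=
    { toFun := fun a => ⟨a + a0, by
        have h1 : dotHom p r v a = 0 := a.2
        rw [dotProduct_comm]
        change dotHom p r v (a + a0) = 1
        rw [map_add, h1, ha0, zero_add]⟩
      invFun := fun a => ⟨a - a0, by
        have h1 : dotHom p r v a = 1 := (dotProduct_comm _ _).trans a.2
        rw [AddMonoidHom.mem_ker, map_sub, h1, ha0, sub_self]⟩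
      left_inv := fun a => by simp
      right_inv := fun a => by simp }
  rw [← Nat.card_congr e]
  have := (dotHom p r v).ker.card_mul_index
  rw [AddSubgroup.index_ker, AddMonoidHom.range_eq_top.mpr hsurj] at this
  simpa using this

variable {p r} in
/-- the number of index-`p` subgroups not containing `v` -/
theorem card_addSubgroup (v : Fin r → ZMod p) (hv : v ≠ 0) :
    Nat.card {H : AddSubgroup (Fin r → ZMod p) // H.index = p ∧ v ∉ H} * p = p ^ r := by
  rw [← card_dot p r v hv]
  congr 1
  symm
  have hidx (a : Fin r → ZMod p) (ha : a ⬝ᵥ v = 1) : Function.Surjective (dotHom p r a) := by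
    intro c
    refine ⟨c • v, ?_⟩
    simp [dotHom, ha]
  refine Nat.card_eq_of_bijective
    (fun a : {a : Fin r → ZMod p // a ⬝ᵥ v = 1} =>
    (⟨(dotHom p r a).ker, by
      rw [AddSubgroup.index_ker, AddMonoidHom.range_eq_top.mpr (hidx a.1 a.2)]; simp, by
      rw [AddMonoidHom.mem_ker]
      change ¬ (a.1 ⬝ᵥ v = 0)
      rw [a.2]; exact one_ne_zero⟩ :
      {H : AddSubgroup (Fin r → ZMod p) // H.index = p ∧ v ∉ H})) ⟨?_, ?_⟩
  · rintro ⟨a, ha⟩ ⟨b, hb⟩ hab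
    have hker : (dotHom p r a).ker = (dotHom p r b).ker := congrArg Subtype.val hab
    apply Subtype.ext
    change a = b
    have key : ∀ w, a ⬝ᵥ w = b ⬝ᵥ w := by
      intro w
      have h1 : w - (a ⬝ᵥ w) • v ∈ (dotHom p r a).ker := by
        rw [AddMonoidHom.mem_ker]
        change a ⬝ᵥ (w - (a ⬝ᵥ w) • v) = 0
        simp [dotProduct_sub, ha]
      rw [hker, AddMonoidHom.mem_ker] at h1
      change b ⬝ᵥ (w - (a ⬝ᵥ w) • v) = 0 at h1
      rw [dotProduct_sub, dotProduct_smul, hb, sub_eq_zero] at h1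
      simpa using h1.symm
    ext i
    simpa using key (Pi.single i 1)
  · rintro ⟨H, hH, hvH⟩
    have hc : Nat.card ((Fin r → ZMod p) ⧸ H) = p := hH
    have e : ((Fin r → ZMod p) ⧸ H) ≃+ ZMod p := by
      haveI : IsAddCyclic ((Fin r → ZMod p) ⧸ H) := isAddCyclic_of_prime_card hc
      exact (addEquivOfPrimeCardEq hc (by simp))
    let f0 : (Fin r → ZMod p) →+ ZMod p := e.toAddMonoidHom.comp (QuotientAddGroup.mk' H)
    have hf0 : ∀ w, f0 w = 0 ↔ w ∈ H := by
      intro w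
      simp [f0]
    have hc0 : f0 v ≠ 0 := by rwa [Ne, hf0]
    let f : (Fin r → ZMod p) →+ ZMod p := (AddMonoidHom.mulLeft (f0 v)⁻¹).comp f0
    obtain ⟨a, ha⟩ := exists_dotHom p r f
    refine ⟨⟨a, ?_⟩, ?_⟩
    · change dotHom p r a v = 1
      rw [← ha]
      simp [f, hc0]
    · apply Subtype.ext
      change (dotHom p r a).ker = H
      rw [← ha]
      ext w
      rw [← hf0]
      simp [f, hc0]

variable {p r} in
theorem card_subgroup {Γ : Type} [Group Γ] (e : Γ ≃* Multiplicative (Fin r → ZMod p))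
    (g : Γ) (hg : g ≠ 1) :
    Nat.card {H : Subgroup Γ // H.index = p ∧ g ∉ H} * p = p ^ r := by
  rw [← card_addSubgroup (p := p) (r := r) (Multiplicative.toAdd (e g)) (by simpa using hg)]
  congr 1
  let E : AddSubgroup (Fin r → ZMod p) ≃ Subgroup Γ :=
    AddSubgroup.toSubgroup.toEquiv.trans (e.symm.mapSubgroup).toEquiv
  symm
  refine Nat.card_congr (E.subtypeEquiv fun H => ?_)
  have h1 : E H = (AddSubgroup.toSubgroup H).map e.symm.toMonoidHom := rfl
  have h2 : (E H).index = H.index := by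
    rw [h1]
    rw [Subgroup.index_map_of_bijective e.symm.bijective]
    rfl
  rw [h2, h1]
  refine and_congr_right fun _ => not_congr ?_
  rw [Subgroup.mem_map_equiv]
  rfl
end count

section dec
variable {Γ C : Type} [Group Γ] [Fintype Γ] [CommGroup C]
  (ρ : Γ → C →* C)

/-- fixed subgroup -/
def fixSub (H : Subgroup Γ) : Subgroup C where
  carrier := {x | ∀ h ∈ H, ρ h x = x}
  one_mem' := by intro h _; simp
  mul_mem' := by intro a b ha hb h hh; rw [map_mul, ha h hh, hb h hh]
  inv_mem' := by intro a ha h hh; rw [map_inv, ha h hh]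

open Classical in
/-- norm -/
noncomputable def nrm (H : Subgroup Γ) : C →* C := ∏ h : H, ρ (h : Γ)

open Classical in
theorem nrm_apply (H : Subgroup Γ) (x : C) : nrm ρ H x = ∏ h : H, ρ (h : Γ) x := by
  simp [nrm, MonoidHom.finsetProd_apply]

theorem nrm_fixed (hmul : ∀ g h x, ρ (g * h) x = ρ g (ρ h x))
    (H : Subgroup Γ) (x : C) (g : Γ) (hg : g ∈ H) :
    ρ g (nrm ρ H x) = nrm ρ H x := by
  classical
  rw [nrm_apply, map_prod, ← Equiv.prod_comp (Equiv.mulLeft (⟨g, hg⟩ : H)) (fun h : H => ρ (h : Γ) x)]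
  simp [hmul]

theorem nrm_comm (hmul : ∀ g h x, ρ (g * h) x = ρ g (ρ h x))
    (hcomm : ∀ a b : Γ, a * b = b * a) (H : Subgroup Γ) (x : C) (g : Γ) :
    ρ g (nrm ρ H x) = nrm ρ H (ρ g x) := by
  classical
  rw [nrm_apply, nrm_apply, map_prod]
  refine Finset.prod_congr rfl fun h _ => ?_
  rw [← hmul, ← hmul, hcomm]

theorem nrm_of_fixed (H : Subgroup Γ) (x : C) (hx : x ∈ fixSub ρ H) :
    nrm ρ H x = x ^ Nat.card H := by
  classical
  rw [nrm_apply, Finset.prod_congr rfl (fun (h : H) _ => hx h.1 h.2)]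
  simp [Nat.card_eq_fintype_card]

theorem decomposition (h1 : ∀ x, ρ 1 x = x)
    (hmul : ∀ g h x, ρ (g * h) x = ρ g (ρ h x)) {p r l : ℕ} (hp : p.Prime) (hr : r ≠ 0)
    (e : Γ ≃* Multiplicative (Fin r → ZMod p)) (hl : 1 < l) (hcop : l.Coprime p)
    (X : Subgroup C) (hXl : ∀ x ∈ X, x ^ l = 1) (hXρ : ∀ g, ∀ x ∈ X, ρ g x ∈ X)
    (hXN : ∀ x ∈ X, ∏ g : Γ, ρ g x = 1) :
    Nat.card X = ∏ᶠ (H : Subgroup Γ) (_ : H.index = p), Nat.card ↥(X ⊓ fixSub ρ H) := by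
  classical
  have : Fact p.Prime := ⟨hp⟩
  have hcomm : ∀ a b : Γ, a * b = b * a := fun a b => e.injective (by rw [map_mul, map_mul, mul_comm])
  have hcardΓ : Nat.card Γ = p ^ r := by
    rw [Nat.card_congr e.toEquiv]; simp
  have hpr : p ^ r = p ^ (r - 1) * p := (pow_sub_one_mul hr p).symm
  have hcopn : ∀ n, (p ^ n).Coprime l := fun n => Nat.Coprime.pow_left n hcop.symm
  have hcardH : ∀ H : Subgroup Γ, H.index = p → Nat.card H = p ^ (r - 1) := by
    intro H hH
    have := H.card_mul_index
    rw [hH, hcardΓ, hpr] at this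
    exact Nat.eq_of_mul_eq_mul_right hp.pos this
  have hcount : ∀ g : Γ, g ≠ 1 → Nat.card {H : Subgroup Γ // H.index = p ∧ g ∉ H} = p ^ (r - 1) := by
    intro g hg
    have := card_subgroup e g hg
    rw [hpr] at this
    exact Nat.eq_of_mul_eq_mul_right hp.pos this
  -- fixed by everything is trivial
  have hfix : ∀ x ∈ X, (∀ g, ρ g x = x) → x = 1 := by
    intro x hx hg
    refine eq_one_of_pows (hcopn r) ?_ (hXl x hx)
    have := hXN x hx
    rw [Finset.prod_congr rfl (fun g _ => hg g)] at this
    simpa [← hcardΓ, Nat.card_eq_fintype_card] using this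
  have hNX : ∀ H, ∀ x ∈ X, nrm ρ H x ∈ X := by
    intro H x hx
    rw [nrm_apply]
    exact Subgroup.prod_mem _ fun h _ => hXρ _ _ hx
  have horth : ∀ H H' : Subgroup Γ, H.index = p → H'.index = p → H ≠ H' →
      ∀ x ∈ X ⊓ fixSub ρ H', nrm ρ H x = 1 := by
    intro H H' hH hH' hne x hx
    apply hfix _ (hNX H x hx.1)
    let T : Subgroup Γ :=
      { carrier := {g | ρ g (nrm ρ H x) = nrm ρ H x}
        one_mem' := h1 _
        mul_mem' := by
          intro a b ha hb
          change ρ (a * b) _ = _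
          rw [hmul, hb, ha]
        inv_mem' := by
          intro a ha
          change ρ a⁻¹ _ = _
          have ha' : ρ a (nrm ρ H x) = nrm ρ H x := ha
          conv_lhs => rw [← ha']
          rw [← hmul, inv_mul_cancel, h1] }
    have hHT : H ≤ T := fun g hg => nrm_fixed ρ hmul H x g hg
    have hHT' : H' ≤ T := fun g hg => by
      change ρ g (nrm ρ H x) = _
      rw [nrm_comm ρ hmul hcomm, hx.2 g hg]
    have hT : T = ⊤ := by
      by_contra hTt
      have hd : T.index ∣ p := hH ▸ Subgroup.index_dvd_of_le hHT
      have hTi : T.index = p := by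
        rcases (Nat.dvd_prime hp).mp hd with h | h
        · exact absurd (Subgroup.index_eq_one.mp h) hTt
        · exact h
      have hcT := hcardH T hTi
      have e1 : H = T := Subgroup.eq_of_le_of_card_ge hHT (by rw [hcT, hcardH H hH])
      have e2 : H' = T := Subgroup.eq_of_le_of_card_ge hHT' (by rw [hcT, hcardH H' hH'])
      exact hne (e1.trans e2.symm)
    intro g
    have : g ∈ T := by rw [hT]; trivial
    exact this
  -- the sum formula
  have hsum : ∀ x ∈ X, ∏ H : {H : Subgroup Γ // H.index = p}, nrm ρ H.1 x = x ^ (p ^ (r - 1)) := by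
    intro x hx
    have hA : ∀ H : Subgroup Γ, nrm ρ H x = ∏ g : Γ, if g ∈ H then ρ g x else 1 := by
      intro H
      rw [nrm_apply, ← Finset.prod_filter]
      exact (Finset.prod_subtype (Finset.univ.filter (· ∈ H)) (by simp) (fun g => ρ g x)).symm
    have hB : (∏ H : {H : Subgroup Γ // H.index = p}, nrm ρ H.1 x) *
        ∏ H : {H : Subgroup Γ // H.index = p}, (∏ g : Γ, if g ∈ H.1 then 1 else ρ g x) = 1 := by
      rw [← Finset.prod_mul_distrib]
      refine Finset.prod_eq_one fun H _ => ?_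
      rw [hA, ← Finset.prod_mul_distrib]
      refine (Finset.prod_congr rfl fun g _ => ?_).trans (hXN x hx)
      split_ifs <;> simp
    have hC : ∏ H : {H : Subgroup Γ // H.index = p}, (∏ g : Γ, if g ∈ H.1 then 1 else ρ g x)
        = (x ^ (p ^ (r - 1)))⁻¹ := by
      rw [Finset.prod_comm]
      have hD : ∀ g : Γ, (∏ H : {H : Subgroup Γ // H.index = p}, if g ∈ H.1 then 1 else ρ g x)
          = (if g = 1 then 1 else ρ g x) ^ (p ^ (r - 1)) := by
        intro g
        split_ifs with hg
        · subst hg; simp [one_mem]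
        · rw [← hcount g hg, Nat.card_congr (Equiv.subtypeSubtypeEquivSubtypeInter _ _).symm,
            Nat.card_eq_fintype_card, Fintype.card_subtype, ← Finset.prod_const, Finset.prod_filter]
          refine Finset.prod_congr rfl fun H _ => ?_
          by_cases hh : g ∈ H.1 <;> simp [hh]
      rw [Finset.prod_congr rfl (fun g _ => hD g), Finset.prod_pow, ← inv_pow]
      congr 1
      have h2 : (∏ g : Γ, if g = 1 then 1 else ρ g x) * ∏ g : Γ, (if g = 1 then ρ g x else 1) = 1 := by
        rw [← Finset.prod_mul_distrib]
        refine (Finset.prod_congr rfl fun g _ => ?_).trans (hXN x hx)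
        split_ifs <;> simp
      rw [Finset.prod_ite_eq' Finset.univ (1 : Γ) (fun g => ρ g x)] at h2
      simp only [Finset.mem_univ, if_true, h1] at h2
      exact eq_inv_of_mul_eq_one_left h2
    rw [hC] at hB
    exact (mul_inv_eq_one.mp hB)
  have hfin : ∏ᶠ (H : Subgroup Γ) (_ : H.index = p), Nat.card ↥(X ⊓ fixSub ρ H) =
      ∏ H : {H : Subgroup Γ // H.index = p}, Nat.card ↥(X ⊓ fixSub ρ H.1) := by
    rw [← finprod_eq_prod_of_fintype]
    exact (finprod_subtype_eq_finprod_cond (fun H : Subgroup Γ => H.index = p)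
      (f := fun H => Nat.card ↥(X ⊓ fixSub ρ H))).symm
  rw [hfin, ← Nat.card_pi]
  symm
  let Φ : (∀ H : {H : Subgroup Γ // H.index = p}, ↥(X ⊓ fixSub ρ H.1)) →* X :=
    { toFun := fun x => ⟨∏ H, (x H : C), Subgroup.prod_mem _ fun H _ => (x H).2.1⟩
      map_one' := by ext; simp
      map_mul' := by intro x y; ext; simp [Finset.prod_mul_distrib] }
  refine Nat.card_eq_of_bijective Φ ⟨?_, ?_⟩
  · rw [injective_iff_map_eq_one]
    intro x hx
    funext H
    apply Subtype.ext
    change (x H : C) = 1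
    have hx' : ∏ H, (x H : C) = 1 := congrArg Subtype.val hx
    have h3 := congrArg (nrm ρ H.1) hx'
    rw [map_prod, map_one, Finset.prod_eq_single H] at h3
    · rw [nrm_of_fixed ρ _ _ (x H).2.2, hcardH _ H.2] at h3
      exact eq_one_of_pows (hcopn _) h3 (hXl _ (x H).2.1)
    · intro H' _ hne
      exact horth H.1 H'.1 H.2 H'.2 (fun h => hne (Subtype.ext h.symm)) _ (x H').2
    · simp
  · rintro ⟨x, hx⟩
    obtain ⟨m, hm⟩ := exists_inv_pow hl (hcopn (r - 1))
    refine ⟨fun H => ⟨nrm ρ H.1 (x ^ m), hNX _ _ (X.pow_mem hx m), fun g hg => nrm_fixed ρ hmul _ _ g hg⟩, ?_⟩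
    apply Subtype.ext
    change ∏ H : {H : Subgroup Γ // H.index = p}, nrm ρ H.1 (x ^ m) = x
    rw [hsum _ (X.pow_mem hx m), ← pow_mul, mul_comm]
    exact hm C x (hXl x hx)

end dec
end RelCl

namespace RelCl

theorem cact_subgroup {L G : Type} [Field L] [NumberField L] [Group G] [MulSemiringAction G L]
    (H : Subgroup G) (h : H) (x : ClassGroup (𝓞 L)) : cact h x = cact (h : G) x := by
  obtain ⟨I, rfl⟩ := ClassGroup.mk0_surjective x
  rw [cact_mk0, cact_mk0]
  rfl

theorem norm_act {k L Γ : Type} [Field k] [Field L] [NumberField k] [NumberField L] [Algebra k L]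
    [Group Γ] [Finite Γ] [MulSemiringAction Γ L] [IsGaloisGroup Γ k L]
    (NmL : ClassGroup (𝓞 L) →* ClassGroup (𝓞 k))
    (hNmL : ∀ (I : (Ideal (𝓞 L))⁰),
      NmL (ClassGroup.mk0 I) = ClassGroup.mk0 ⟨Ideal.relNorm (𝓞 k) (I : Ideal (𝓞 L)), relNorm_nzd I⟩)
    (g : Γ) (x : ClassGroup (𝓞 L)) : NmL (cact g x) = NmL x := by
  obtain ⟨I, rfl⟩ := ClassGroup.mk0_surjective x
  have : SMulCommClass Γ (𝓞 k) (𝓞 L) := IsGaloisGroup.commutes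
  rw [cact_mk0, hNmL, hNmL]
  congr 1
  ext1
  exact Ideal.relNorm_smul (𝓞 k) g (I : Ideal (𝓞 L))

theorem norm_ext {k K L : Type} [Field k] [Field K] [Field L] [NumberField k] [NumberField K]
    [NumberField L] [Algebra k L] [Algebra k K] [Algebra K L] [IsScalarTower k K L]
    (NmL : ClassGroup (𝓞 L) →* ClassGroup (𝓞 k))
    (hNmL : ∀ (I : (Ideal (𝓞 L))⁰),
      NmL (ClassGroup.mk0 I) = ClassGroup.mk0 ⟨Ideal.relNorm (𝓞 k) (I : Ideal (𝓞 L)), relNorm_nzd I⟩)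
    (NmK : ClassGroup (𝓞 K) →* ClassGroup (𝓞 k))
    (hNmK : ∀ (I : (Ideal (𝓞 K))⁰),
      NmK (ClassGroup.mk0 I) = ClassGroup.mk0 ⟨Ideal.relNorm (𝓞 k) (I : Ideal (𝓞 K)), relNorm_nzd I⟩)
    (x : ClassGroup (𝓞 K)) :
    NmL (ClassGroup.extendedHom (𝓞 K) (𝓞 L) x) = NmK x ^ Module.finrank (𝓞 K) (𝓞 L) := by
  obtain ⟨I, rfl⟩ := ClassGroup.mk0_surjective x
  rw [ClassGroup.extendedHom_mk0, hNmL, hNmK, ← map_pow]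
  congr 1
  ext1
  rw [SubmonoidClass.coe_pow]
  change Ideal.relNorm (𝓞 k) ((I : Ideal (𝓞 K)).map (algebraMap (𝓞 K) (𝓞 L)))
    = Ideal.relNorm (𝓞 k) (I : Ideal (𝓞 K)) ^ _
  rw [← Ideal.relNorm_relNorm (𝓞 k) (𝓞 K), Ideal.relNorm_algebraMap, map_pow]

theorem card_eq {k K L G : Type} [Field k] [Field K] [Field L] [NumberField k] [NumberField K]
    [NumberField L] [Algebra k L] [Algebra k K] [Algebra K L] [IsScalarTower k K L]
    [Group G] [Fintype G] [MulSemiringAction G L] [IsGaloisGroup G k L]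
    (H : Subgroup G) [IsGaloisGroup H K L] {l : ℕ} (hl : 1 < l) (hcop : (Nat.card H).Coprime l)
    (NmL : ClassGroup (𝓞 L) →* ClassGroup (𝓞 k))
    (hNmL : ∀ (I : (Ideal (𝓞 L))⁰),
      NmL (ClassGroup.mk0 I) = ClassGroup.mk0 ⟨Ideal.relNorm (𝓞 k) (I : Ideal (𝓞 L)), relNorm_nzd I⟩)
    (NmK : ClassGroup (𝓞 K) →* ClassGroup (𝓞 k))
    (hNmK : ∀ (I : (Ideal (𝓞 K))⁰),
      NmK (ClassGroup.mk0 I) = ClassGroup.mk0 ⟨Ideal.relNorm (𝓞 k) (I : Ideal (𝓞 K)), relNorm_nzd I⟩) :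
    Nat.card ↥(NmK.ker ⊓ lTors (ClassGroup (𝓞 K)) l) =
      Nat.card ↥((NmL.ker ⊓ lTors (ClassGroup (𝓞 L)) l) ⊓ fixSub (fun g : G => cact g) H) := by
  classical
  have hn : Nat.card H = Module.finrank (𝓞 K) (𝓞 L) := by
    rw [IsGaloisGroup.card_eq_finrank H K L, IsFractionRing.finrank_eq (𝓞 K) K (𝓞 L) L]
  have hNE := norm_ext (K := K) NmL hNmL NmK hNmK
  rw [← hn] at hNE
  have hinj := ext_inj (𝓞 K) (𝓞 L)
  rw [← hn] at hinj
  have hfixed : ∀ x : ClassGroup (𝓞 K), ∀ g ∈ H,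
      cact g (ClassGroup.extendedHom (𝓞 K) (𝓞 L) x) = ClassGroup.extendedHom (𝓞 K) (𝓞 L) x := by
    intro x g hg
    rw [← cact_subgroup H ⟨g, hg⟩]
    exact ext_act K L H _ _
  have hnorm : ∀ y : ClassGroup (𝓞 L), ∃ z : ClassGroup (𝓞 K),
      ClassGroup.extendedHom (𝓞 K) (𝓞 L) z = ∏ g : H, cact (g : G) y := by
    intro y
    obtain ⟨I, rfl⟩ := ClassGroup.mk0_surjective y
    refine ⟨_, (ext_relNorm K L H I).trans ?_⟩
    exact Finset.prod_congr rfl fun h _ => cact_subgroup H h _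
  generalize ClassGroup.extendedHom (𝓞 K) (𝓞 L) = E at *
  let Φ : ↥(NmK.ker ⊓ lTors (ClassGroup (𝓞 K)) l) →*
      ↥((NmL.ker ⊓ lTors (ClassGroup (𝓞 L)) l) ⊓ fixSub (fun g : G => cact g) H) :=
    (E.comp (Subgroup.subtype _)).codRestrict _ (by
      rintro ⟨x, hx1, hx2⟩
      have hx1' : NmK x = 1 := hx1
      have hx2' : x ^ l = 1 := hx2
      refine ⟨⟨?_, ?_⟩, ?_⟩
      · change NmL (E x) = 1
        rw [hNE, hx1', one_pow]
      · change (E x) ^ l = 1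
        rw [← map_pow, hx2', map_one]
      · exact hfixed x)
  refine Nat.card_eq_of_bijective Φ ⟨?_, ?_⟩
  · rw [injective_iff_map_eq_one]
    rintro ⟨x, hx1, hx2⟩ h
    have h' : E x = 1 := congrArg Subtype.val h
    exact Subtype.ext (eq_one_of_pows hcop (hinj x h') hx2)
  · rintro ⟨y, ⟨hy1, hy2⟩, hy3⟩
    have hy1' : NmL y = 1 := hy1
    have hy2' : y ^ l = 1 := hy2
    obtain ⟨z, hz⟩ := hnorm y
    have hz' : E z = y ^ Nat.card H := by
      rw [hz, Finset.prod_congr rfl (fun (g : H) _ => hy3 g.1 g.2)]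
      simp [Nat.card_eq_fintype_card]
    obtain ⟨m, hm⟩ := exists_inv_pow hl hcop
    have hzl : (z ^ Nat.card H) ^ l = 1 := by
      rw [← pow_mul, mul_comm, pow_mul]
      apply hinj
      rw [map_pow, hz', ← pow_mul, mul_comm, pow_mul, hy2', one_pow]
    have hEw : E ((z ^ Nat.card H) ^ (m * m)) = y := by
      rw [map_pow, map_pow, hz']
      have h1 : ((y ^ Nat.card H) ^ Nat.card H) ^ (m * m)
          = (y ^ (Nat.card H * m)) ^ (Nat.card H * m) := by
        simp only [← pow_mul]; congr 1; ring
      rw [h1, hm _ y hy2', hm _ y hy2']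
    have hwl : ((z ^ Nat.card H) ^ (m * m)) ^ l = 1 := by
      rw [← pow_mul, mul_comm, pow_mul, hzl, one_pow]
    refine ⟨⟨(z ^ Nat.card H) ^ (m * m), ?_, hwl⟩, Subtype.ext hEw⟩
    change NmK _ = 1
    refine eq_one_of_pows hcop ?_ (by rw [← map_pow, hwl, map_one])
    rw [← hNE, hEw, hy1']

end RelCl

end aux

/-- For `A = (ℤ/pℤ)^r` (`r ≥ 2`), `ℓ > 1` coprime to `p`, and an
`A`-extension `L/k` of number fields, the `ℓ`-torsion of the relative class
group (the kernel of the ideal-norm map `Nm` on class groups) satisfies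
`|Cl_{L/k}[ℓ]| = Π_i |Cl_{K_i/k}[ℓ]|`, the product over all degree-`p`
subfields `K_i` of `L/k`. -/
theorem relative_class_group_decomposition (p r ℓ : ℕ) (hp : p.Prime)
    (hr : 2 ≤ r) (hℓ : 1 < ℓ) (hcop : ℓ.Coprime p)
    (k L : Type) [Field k] [Field L] [NumberField k] [NumberField L]
    [Algebra k L] [IsGalois k L]
    (e : (L ≃ₐ[k] L) ≃* Multiplicative (Fin r → ZMod p))
    (NmL : ClassGroup (𝓞 L) →* ClassGroup (𝓞 k))
    (hNmL : ∀ (I : Ideal (𝓞 L)) (hI : I ∈ nonZeroDivisors (Ideal (𝓞 L)))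
      (hJ : Ideal.spanNorm (𝓞 k) I ∈ nonZeroDivisors (Ideal (𝓞 k))),
      NmL (ClassGroup.mk0 ⟨I, hI⟩) = ClassGroup.mk0 ⟨Ideal.spanNorm (𝓞 k) I, hJ⟩)
    (Nm : ∀ K : IntermediateField k L, ClassGroup (𝓞 K) →* ClassGroup (𝓞 k))
    (hNm : ∀ (K : IntermediateField k L) (I : Ideal (𝓞 K))
      (hI : I ∈ nonZeroDivisors (Ideal (𝓞 K)))
      (hJ : Ideal.spanNorm (𝓞 k) I ∈ nonZeroDivisors (Ideal (𝓞 k))),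
      Nm K (ClassGroup.mk0 ⟨I, hI⟩) =
        ClassGroup.mk0 ⟨Ideal.spanNorm (𝓞 k) I, hJ⟩) :
    Nat.card ↥(NmL.ker ⊓ lTors (ClassGroup (𝓞 L)) ℓ) =
      ∏ᶠ (K : IntermediateField k L) (_ : Module.finrank k K = p),
        Nat.card ↥((Nm K).ker ⊓ lTors (ClassGroup (𝓞 K)) ℓ) := by
  classical
  have hNmL' : ∀ (I : nonZeroDivisors (Ideal (𝓞 L))), NmL (ClassGroup.mk0 I) =
      ClassGroup.mk0 ⟨Ideal.relNorm (𝓞 k) (I : Ideal (𝓞 L)), RelCl.relNorm_nzd I⟩ :=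
    fun I => hNmL I.1 I.2 (RelCl.relNorm_nzd I)
  have hNm' : ∀ (K : IntermediateField k L) (I : nonZeroDivisors (Ideal (𝓞 K))),
      Nm K (ClassGroup.mk0 I) =
      ClassGroup.mk0 ⟨Ideal.relNorm (𝓞 k) (I : Ideal (𝓞 K)), RelCl.relNorm_nzd I⟩ :=
    fun K I => hNm K I.1 I.2 (RelCl.relNorm_nzd I)
  have hG : Nat.card (L ≃ₐ[k] L) = p ^ r := by
    have : Fact p.Prime := ⟨hp⟩
    rw [Nat.card_congr e.toEquiv]; simp
  have hdec := RelCl.decomposition (fun g : L ≃ₐ[k] L => RelCl.cact (S := 𝓞 L) g)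
    RelCl.cact_one RelCl.cact_mul hp (by omega) e hℓ hcop
    (NmL.ker ⊓ lTors (ClassGroup (𝓞 L)) ℓ) (fun x hx => hx.2)
    (by
      rintro g x ⟨hx1, hx2⟩
      have hx1' : NmL x = 1 := hx1
      have hx2' : x ^ ℓ = 1 := hx2
      refine ⟨?_, ?_⟩
      · change NmL (RelCl.cact g x) = 1
        rw [RelCl.norm_act NmL hNmL', hx1']
      · change (RelCl.cact g x) ^ ℓ = 1
        rw [← map_pow, hx2', map_one])
    (by
      rintro x ⟨hx1, hx2⟩
      have hx1' : NmL x = 1 := hx1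
      obtain ⟨I, rfl⟩ := ClassGroup.mk0_surjective x
      rw [← RelCl.ext_relNorm k L (L ≃ₐ[k] L) I, ← hNmL', hx1', map_one])
  rw [hdec]
  symm
  refine finprod_eq_of_bijective
    (fun K : IntermediateField k L => fixingSubgroup (L ≃ₐ[k] L) (K : Set L))
    (IsGaloisGroup.intermediateFieldEquivSubgroup (L ≃ₐ[k] L) k L).bijective fun K => ?_
  have hidx : Module.finrank k K = (fixingSubgroup (L ≃ₐ[k] L) (K : Set L)).index :=
    IntermediateField.finrank_eq_fixingSubgroup_index L K
  have hcopK : (Nat.card (fixingSubgroup (L ≃ₐ[k] L) (K : Set L))).Coprime ℓ := by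
    refine Nat.Coprime.of_dvd_left (Subgroup.card_subgroup_dvd_card _) ?_
    rw [hG]
    exact Nat.Coprime.pow_left _ hcop.symm
  rw [hidx, RelCl.card_eq (fixingSubgroup (L ≃ₐ[k] L) (K : Set L)) hℓ hcopK NmL hNmL' (Nm K) (hNm' K)]
end

section
/- Let p be a prime, A = (ℤ/pℤ)^r with r ≥ 3, and ℓ > 1 with gcd(ℓ, p) = 1. For any A-extension L/k, |Cl_{L/k}[ℓ]|^{(p^{r-1}-1)/(p-1)} = ∏_j |Cl_{M_j/k}[ℓ]|, where M_j ranges over all subfields of L with [M_j : k] = p². -/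
open NumberField

set_option linter.unusedSectionVars false

section part1
open Module

theorem card_hyper (p : ℕ) [Fact p.Prime] (V : Type) [AddCommGroup V] [Module (ZMod p) V]
    [Finite V] : Nat.card {W : Submodule (ZMod p) V // finrank (ZMod p) W + 1 = finrank (ZMod p) V}
      = (p ^ (finrank (ZMod p) V) - 1) / (p - 1) := by
  have : FiniteDimensional (ZMod p) V := inferInstance
  let e1 : {W : Submodule (ZMod p) V // finrank (ZMod p) W + 1 = finrank (ZMod p) V} ≃
      {H : Submodule (ZMod p) (Dual (ZMod p) V) // finrank (ZMod p) H = 1} :=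
    ((Subspace.orderIsoFiniteDimensional (K := ZMod p) (V := V)).toEquiv.trans
      OrderDual.ofDual).subtypeEquiv (by
        intro W
        have h := Subspace.finrank_add_finrank_dualAnnihilator_eq W
        change _ ↔ finrank (ZMod p) W.dualAnnihilator = 1
        omega)
  rw [Nat.card_congr e1, ← Nat.card_congr (Projectivization.equivSubmodule _ _),
    Projectivization.card'', Nat.card_zmod, Module.natCard_eq_pow_finrank (K := ZMod p),
    Subspace.dual_finrank_eq, Nat.card_zmod]

theorem card_hyper_le (p : ℕ) [Fact p.Prime] (V : Type) [AddCommGroup V] [Module (ZMod p) V]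
    [Finite V] (U : Submodule (ZMod p) V) :
    Nat.card {W : Submodule (ZMod p) V // finrank (ZMod p) W + 1 = finrank (ZMod p) U ∧ W ≤ U}
      = (p ^ (finrank (ZMod p) U) - 1) / (p - 1) := by
  rw [← card_hyper]
  symm
  refine Nat.card_congr ((Equiv.subtypeEquiv (Submodule.mapIic U).toEquiv
    (q := fun W => finrank (ZMod p) W.1 + 1 = finrank (ZMod p) U) ?_).trans ?_)
  · intro W
    have : finrank (ZMod p) (W.map U.subtype) = finrank (ZMod p) W :=
      (Submodule.equivMapOfInjective U.subtype U.injective_subtype W).finrank_eq.symm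
    change _ ↔ finrank (ZMod p) (W.map U.subtype) + 1 = _
    rw [this]
  · refine ⟨fun W => ⟨W.1.1, W.2, W.1.2⟩, fun W => ⟨⟨W.1, W.2.2⟩, W.2.1⟩, fun _ => rfl, fun _ => rfl⟩

theorem card_hyper_ge (p : ℕ) [Fact p.Prime] (V : Type) [AddCommGroup V] [Module (ZMod p) V]
    [Finite V] (U : Submodule (ZMod p) V) :
    Nat.card {W : Submodule (ZMod p) V // finrank (ZMod p) W + 1 = finrank (ZMod p) V ∧ U ≤ W}
      = (p ^ (finrank (ZMod p) V - finrank (ZMod p) U) - 1) / (p - 1) := by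
  have h := U.finrank_quotient_add_finrank
  have h2 : finrank (ZMod p) (V ⧸ U) = finrank (ZMod p) V - finrank (ZMod p) U := by omega
  have : Finite (V ⧸ U) := Finite.of_surjective _ U.mkQ_surjective
  rw [← h2, ← card_hyper p (V ⧸ U)]
  symm
  refine Nat.card_congr ((Equiv.subtypeEquiv (Submodule.comapMkQRelIso U).toEquiv
    (q := fun W => finrank (ZMod p) W.1 + 1 = finrank (ZMod p) V) ?_).trans ?_)
  · intro W
    have h3 := (W.comap U.mkQ).finrank_quotient_add_finrank
    have h4 := W.finrank_quotient_add_finrank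
    have h5 : finrank (ZMod p) (V ⧸ W.comap U.mkQ) = finrank (ZMod p) ((V ⧸ U) ⧸ W) := by
      refine LinearEquiv.finrank_eq ?_
      refine LinearEquiv.ofBijective (Submodule.mapQ _ W U.mkQ le_rfl) ⟨?_, ?_⟩
      · rw [← LinearMap.ker_eq_bot, Submodule.ker_mapQ]
        simp
      · rw [← LinearMap.range_eq_top, Submodule.range_mapQ]
        simp
    change _ ↔ finrank (ZMod p) (W.comap U.mkQ) + 1 = _
    omega
  · refine ⟨fun W => ⟨W.1.1, W.2, W.1.2⟩, fun W => ⟨⟨W.1, W.2.2⟩, W.2.1⟩, fun _ => rfl, fun _ => rfl⟩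

theorem geom_step (p d : ℕ) (hp : 2 ≤ p) :
    (p ^ (d + 1) - 1) / (p - 1) = p ^ d + (p ^ d - 1) / (p - 1) := by
  have h1 : p ^ (d+1) - 1 = p ^ d * (p - 1) + (p ^ d - 1) := by
    have : 1 ≤ p ^ d := Nat.one_le_pow _ _ (by omega)
    obtain ⟨q, rfl⟩ : ∃ q, p = q + 1 := ⟨p - 1, by omega⟩
    rw [pow_succ, Nat.add_sub_cancel, mul_add]
    omega
  rw [h1, Nat.add_div_of_dvd_right (Dvd.intro_left _ rfl), Nat.mul_div_cancel _ (by omega)]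

section abs
variable {p : ℕ} [Fact p.Prime] {V : Type} [AddCommGroup V] [Module (ZMod p) V] [Fintype V]
variable {D : Type*} [AddCommGroup D] (ρ : Multiplicative V →* AddMonoid.End D)

/-- fixed points -/
def fixS (M : Submodule (ZMod p) V) : AddSubgroup D where
  carrier := {x | ∀ m ∈ M, ρ (Multiplicative.ofAdd m) x = x}
  zero_mem' := by intro m _; exact map_zero _
  add_mem' := by intro a b ha hb m hm; rw [map_add, ha m hm, hb m hm]
  neg_mem' := by intro a ha m hm; rw [map_neg, ha m hm]

open Classical in
/-- norm -/
noncomputable def nrm (M : Submodule (ZMod p) V) (x : D) : D :=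
  ∑ m ∈ Finset.univ.filter (fun m : V => m ∈ M), ρ (Multiplicative.ofAdd m) x

theorem rho_add (a b : V) (x : D) : ρ (Multiplicative.ofAdd a) (ρ (Multiplicative.ofAdd b) x) =
    ρ (Multiplicative.ofAdd (a + b)) x := by
  rw [ofAdd_add, map_mul]; rfl

theorem nrm_mem (M : Submodule (ZMod p) V) (x : D) : nrm ρ M x ∈ fixS ρ M := by
  classical
  intro m hm
  rw [nrm, map_sum]
  refine Finset.sum_bij (fun w _ => m + w) ?_ ?_ ?_ ?_
  · intro w hw; simp only [Finset.mem_filter, Finset.mem_univ, true_and] at *; exact M.add_mem hm hw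
  · intro a _ b _ h; exact add_left_cancel h
  · intro b hb
    simp only [Finset.mem_filter, Finset.mem_univ, true_and] at *
    exact ⟨b - m, M.sub_mem hb hm, by abel⟩
  · intro w _; exact rho_add ρ _ _ _

theorem nrm_mem' (M M' : Submodule (ZMod p) V) (x : D) (hx : x ∈ fixS ρ M') :
    nrm ρ M x ∈ fixS ρ M' := by
  intro m hm
  rw [nrm, map_sum]
  refine Finset.sum_congr rfl fun w _ => ?_
  rw [rho_add, add_comm, ← rho_add, hx m hm]

theorem fixS_sup (M M' : Submodule (ZMod p) V) (x : D) (hx : x ∈ fixS ρ M) (hx' : x ∈ fixS ρ M') :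
    x ∈ fixS ρ (M ⊔ M') := by
  intro m hm
  obtain ⟨a, ha, b, hb, rfl⟩ := Submodule.mem_sup.1 hm
  rw [← rho_add, hx' b hb, hx a ha]

theorem card_mem_filter (M : Submodule (ZMod p) V) [DecidablePred (fun m : V => m ∈ M)] :
    (Finset.univ.filter (fun m : V => m ∈ M)).card = p ^ finrank (ZMod p) M := by
  rw [← Fintype.card_subtype, ← Nat.card_eq_fintype_card]
  rw [Module.natCard_eq_pow_finrank (K := ZMod p), Nat.card_zmod]

theorem nrm_fix (M : Submodule (ZMod p) V) (x : D) (hx : x ∈ fixS ρ M) :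
    nrm ρ M x = p ^ finrank (ZMod p) M • x := by
  classical
  rw [nrm, Finset.sum_congr rfl (g := fun _ => x), Finset.sum_const, card_mem_filter]
  intro m hm
  exact hx m (by simpa using hm)

theorem nrm_eq_zero (h0 : ∀ x ∈ fixS (p := p) ρ ⊤, x = 0) {d : ℕ} (hV : finrank (ZMod p) V = d + 1)
    (W M : Submodule (ZMod p) V) (hW : finrank (ZMod p) W = d) (hM : ¬ M ≤ W) (x : D)
    (hx : x ∈ fixS ρ M) : nrm ρ W x = 0 := by
  apply h0
  have : W ⊔ M = ⊤ := by
    apply Submodule.eq_top_of_finrank_eq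
    have h1 : W < W ⊔ M := left_lt_sup.2 hM
    have h2 := Submodule.finrank_lt_finrank_of_lt h1
    have h3 := (W ⊔ M).finrank_le
    omega
  rw [← this]
  exact fixS_sup ρ _ _ _ (nrm_mem ρ W x) (nrm_mem' ρ W M x hx)

open Classical in
theorem sum_nrm (h0 : ∀ x ∈ fixS (p := p) ρ ⊤, x = 0) {d : ℕ} (hV : finrank (ZMod p) V = d + 1)
    (x : D) : ∑ W ∈ Finset.univ.filter
      (fun W : Submodule (ZMod p) V => finrank (ZMod p) W + 1 = finrank (ZMod p) V), nrm ρ W x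
      = p ^ d • x := by
  have hc : ∀ v : V, (Finset.univ.filter (fun W : Submodule (ZMod p) V =>
      (finrank (ZMod p) W + 1 = finrank (ZMod p) V) ∧ v ∈ W)).card =
      (p ^ d - 1) / (p - 1) + if v = 0 then p ^ d else 0 := by
    intro v
    have h := card_hyper_ge p V (Submodule.span (ZMod p) {v})
    rw [← Fintype.card_subtype, ← Nat.card_eq_fintype_card,
      Nat.card_congr (Equiv.subtypeEquivRight (fun W : Submodule (ZMod p) V =>
        and_congr_right fun _ => (Submodule.span_singleton_le_iff_mem v W).symm)), h, hV]
    split_ifs with hv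
    · subst hv
      rw [Submodule.span_zero_singleton, finrank_bot, Nat.sub_zero,
        geom_step p d (Fact.out : p.Prime).two_le, add_comm]
    · rw [finrank_span_singleton hv]; simp
  simp only [nrm, Finset.sum_filter]
  have hr : ∀ W : Submodule (ZMod p) V, (if finrank (ZMod p) W + 1 = finrank (ZMod p) V then
      ∑ a : V, (if a ∈ W then ρ (Multiplicative.ofAdd a) x else 0) else 0) =
      ∑ a : V, if (finrank (ZMod p) W + 1 = finrank (ZMod p) V ∧ a ∈ W) then
        ρ (Multiplicative.ofAdd a) x else 0 := by
    intro W
    split_ifs with h <;> simp [h]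
  rw [Finset.sum_congr rfl fun W _ => hr W, Finset.sum_comm]
  have hr2 : ∀ v : V, (∑ W : Submodule (ZMod p) V,
      if (finrank (ZMod p) W + 1 = finrank (ZMod p) V ∧ v ∈ W) then
        ρ (Multiplicative.ofAdd v) x else 0) =
      ((p ^ d - 1) / (p - 1)) • ρ (Multiplicative.ofAdd v) x +
        if v = 0 then p ^ d • ρ (Multiplicative.ofAdd v) x else 0 := by
    intro v
    rw [← Finset.sum_filter, Finset.sum_const, hc, add_smul]
    split_ifs <;> simp
  rw [Finset.sum_congr rfl fun W _ => hr2 W, Finset.sum_add_distrib, ← Finset.smul_sum]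
  have h1 : ∑ v : V, ρ (Multiplicative.ofAdd v) x = 0 := by
    have := h0 _ (nrm_mem (p := p) ρ ⊤ x)
    simpa [nrm] using this
  rw [h1]
  simp

open Classical in
theorem card_fix (h0 : ∀ x ∈ fixS (p := p) ρ ⊤, x = 0) {d : ℕ} (hV : finrank (ZMod p) V = d + 1)
    (u : ℕ) (hu : ∀ x : D, (u * p ^ d) • x = x) (M : Submodule (ZMod p) V) :
    Nat.card (fixS ρ M) =
      ∏ W : {W : Submodule (ZMod p) V // finrank (ZMod p) W + 1 = finrank (ZMod p) V ∧ M ≤ W},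
        Nat.card (fixS ρ W.1) := by
  classical
  rw [← Nat.card_pi]
  have key : ∀ (W W' : {W : Submodule (ZMod p) V //
      finrank (ZMod p) W + 1 = finrank (ZMod p) V ∧ M ≤ W}) (y : D), y ∈ fixS ρ W'.1 →
      u • nrm ρ W.1 y = if W = W' then y else 0 := by
    intro W W' y hy
    have hd : finrank (ZMod p) W.1 = d := by have := W.2.1; omega
    have hd' : finrank (ZMod p) W'.1 = d := by have := W'.2.1; omega
    split_ifs with h
    · subst h
      rw [nrm_fix ρ _ _ hy, hd, smul_smul, hu]
    · rw [nrm_eq_zero ρ h0 hV W.1 W'.1 hd _ y hy, smul_zero]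
      intro hle
      exact h (Subtype.ext (Submodule.eq_of_le_of_finrank_eq hle (by omega)).symm)
  refine Nat.card_congr ⟨fun x W => ⟨u • nrm ρ W.1 x.1,
      (fixS ρ W.1).nsmul_mem (nrm_mem ρ W.1 x.1) u⟩,
    fun y => ⟨∑ W, (y W).1, AddSubgroup.sum_mem _ fun W _ => fun m hm => (y W).2 m (W.2.2 hm)⟩,
    ?_, ?_⟩
  · intro x
    ext
    simp only
    rw [← Finset.smul_sum]
    have h := sum_nrm ρ h0 hV x.1
    rw [← Finset.sum_filter_add_sum_filter_not _ (fun W => M ≤ W)] at h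
    rw [Finset.sum_eq_zero (s := Finset.filter (fun W => ¬ M ≤ W) _), add_zero,
      Finset.filter_filter] at h
    · have h' : ∑ W : {W : Submodule (ZMod p) V //
          finrank (ZMod p) W + 1 = finrank (ZMod p) V ∧ M ≤ W}, nrm ρ W.1 x.1 = p ^ d • x.1 := by
        rw [← h]
        exact (Finset.sum_subtype _ (by simp) (fun W => nrm ρ W x.1)).symm
      rw [h', smul_smul, hu]
    · intro W hW
      simp only [Finset.mem_filter, Finset.mem_univ, true_and] at hW
      exact nrm_eq_zero ρ h0 hV W M (by omega) hW.2 x.1 x.2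
  · intro y
    ext W
    simp only
    have hs : nrm ρ W.1 (∑ W', (y W').1) = ∑ W', nrm ρ W.1 (y W').1 := by
      simp only [nrm, map_sum]
      exact Finset.sum_comm
    rw [hs, Finset.smul_sum, Finset.sum_congr rfl fun W' _ => key W W' _ (y W').2]
    simp

open Classical in
theorem card_second (h0 : ∀ x ∈ fixS (p := p) ρ ⊤, x = 0) {d : ℕ}
    (hV : finrank (ZMod p) V = d + 1) (u : ℕ) (hu : ∀ x : D, (u * p ^ d) • x = x) :
    Nat.card D ^ ((p ^ d - 1) / (p - 1)) =
      ∏ M : {M : Submodule (ZMod p) V // finrank (ZMod p) M + 2 = finrank (ZMod p) V},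
        Nat.card (fixS ρ M.1) := by
  classical
  have h1 : Nat.card D = ∏ W : {W : Submodule (ZMod p) V //
      finrank (ZMod p) W + 1 = finrank (ZMod p) V}, Nat.card (fixS ρ W.1) := by
    have h := card_fix ρ h0 hV u hu ⊥
    have h2 : fixS (p := p) ρ ⊥ = ⊤ := by
      rw [eq_top_iff]
      intro x _ m hm
      rw [(Submodule.mem_bot _).1 hm, ofAdd_zero, map_one]; rfl
    rw [h2, AddSubgroup.card_top] at h
    rw [h]
    exact Fintype.prod_equiv (Equiv.subtypeEquivRight (fun W : Submodule (ZMod p) V => by simp))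
      _ _ (fun _ => rfl)
  rw [h1, ← Finset.prod_pow]
  have h3 : ∀ M : {M : Submodule (ZMod p) V // finrank (ZMod p) M + 2 = finrank (ZMod p) V},
      Nat.card (fixS ρ M.1) = ∏ W : {W : Submodule (ZMod p) V //
      finrank (ZMod p) W + 1 = finrank (ZMod p) V},
        if M.1 ≤ W.1 then Nat.card (fixS ρ W.1) else 1 := by
    intro M
    rw [card_fix ρ h0 hV u hu M.1, ← Finset.prod_filter]
    refine Finset.prod_bij (fun W _ => ⟨W.1, W.2.1⟩) ?_ ?_ ?_ ?_
    · intro W _; simpa using W.2.2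
    · intro a _ b _ h; exact Subtype.ext (by simpa using h)
    · intro b hb; exact ⟨⟨b.1, b.2, by simpa using hb⟩, by simp, rfl⟩
    · intro _ _; rfl
  rw [Finset.prod_congr rfl fun M _ => h3 M, Finset.prod_comm]
  refine Finset.prod_congr rfl fun W _ => ?_
  rw [← Finset.prod_filter, Finset.prod_const]
  congr 1
  have hd : finrank (ZMod p) W.1 = d := by have := W.2; omega
  have h := card_hyper_le p V W.1
  rw [hd] at h
  rw [← h, ← Fintype.card_subtype, ← Nat.card_eq_fintype_card]
  symm
  refine Nat.card_congr ⟨fun M => ⟨M.1.1, by have := M.1.2; omega, M.2⟩,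
    fun M => ⟨⟨M.1, by have := M.2.1; omega⟩, M.2.2⟩, fun _ => rfl, fun _ => rfl⟩
end abs
end part1

section part2
open scoped nonZeroDivisors

section cl
/-- map of class groups induced by an injective ring hom -/
noncomputable def clMap {A B : Type*} [CommRing A] [CommRing B] [IsDomain A] [IsDomain B]
    (f : A →+* B) (hf : Function.Injective f) : ClassGroup A →* ClassGroup B :=
  letI := f.toAlgebra
  haveI : FaithfulSMul A B := (faithfulSMul_iff_algebraMap_injective A B).2 hf
  haveI : Module.IsTorsionFree A B := inferInstance
  ClassGroup.extendedHom A B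

theorem map_mem_nzd {A B : Type*} [CommRing A] [CommRing B] [IsDomain A] [IsDomain B]
    (f : A →+* B) (hf : Function.Injective f) {I : Ideal A} (hI : I ∈ (Ideal A)⁰) :
    I.map f ∈ (Ideal B)⁰ :=
  mem_nonZeroDivisors_iff_ne_zero.mpr <|
    (Ideal.map_eq_bot_iff_of_injective hf).not.mpr (mem_nonZeroDivisors_iff_ne_zero.mp hI)

theorem clMap_mk0 {A B : Type*} [CommRing A] [CommRing B] [IsDedekindDomain A] [IsDedekindDomain B]
    (f : A →+* B) (hf : Function.Injective f) (I : Ideal A) (hI : I ∈ (Ideal A)⁰) :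
    clMap f hf (ClassGroup.mk0 ⟨I, hI⟩) = ClassGroup.mk0 ⟨I.map f, map_mem_nzd f hf hI⟩ := by
  let := f.toAlgebra
  have : FaithfulSMul A B := (faithfulSMul_iff_algebraMap_injective A B).2 hf
  have : Module.IsTorsionFree A B := inferInstance
  exact ClassGroup.extendedHom_mk0 A B ⟨I, hI⟩

theorem clMap_comp {A B C : Type*} [CommRing A] [CommRing B] [CommRing C]
    [IsDedekindDomain A] [IsDedekindDomain B] [IsDedekindDomain C]
    (f : A →+* B) (hf : Function.Injective f) (g : B →+* C) (hg : Function.Injective g)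
    (h : A →+* C) (hh : Function.Injective h) (e : h = g.comp f) (x : ClassGroup A) :
    clMap g hg (clMap f hf x) = clMap h hh x := by
  subst e
  obtain ⟨⟨I, hI⟩, rfl⟩ := ClassGroup.mk0_surjective x
  rw [clMap_mk0, clMap_mk0, clMap_mk0]
  congr 2
  exact Ideal.map_map f g

theorem clMap_id {A : Type*} [CommRing A] [IsDedekindDomain A]
    (f : A →+* A) (hf : Function.Injective f) (e : f = RingHom.id A) (x : ClassGroup A) :
    clMap f hf x = x := by
  subst e
  obtain ⟨⟨I, hI⟩, rfl⟩ := ClassGroup.mk0_surjective x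
  rw [clMap_mk0]
  congr 2
  exact Ideal.map_id I

variable (R S : Type*) [CommRing R] [CommRing S] [IsDedekindDomain R] [IsDedekindDomain S]
  [Algebra R S] [Module.Finite R S] [Module.IsTorsionFree R S]

theorem relNorm_mem_nzd {I : Ideal S} (hI : I ∈ (Ideal S)⁰) : Ideal.relNorm R I ∈ (Ideal R)⁰ :=
  mem_nonZeroDivisors_iff_ne_zero.mpr <|
    (Ideal.relNorm_eq_bot_iff).not.mpr (mem_nonZeroDivisors_iff_ne_zero.mp hI)

/-- norm followed by class -/
noncomputable def preNorm : (Ideal S)⁰ →* ClassGroup R where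
  toFun I := ClassGroup.mk0 ⟨Ideal.relNorm R I.1, relNorm_mem_nzd R S I.2⟩
  map_one' := by
    rw [← map_one ClassGroup.mk0]
    congr 2
    exact map_one (Ideal.relNorm R)
  map_mul' I J := by
    rw [← map_mul]
    congr 2
    exact map_mul (Ideal.relNorm R) _ _

theorem preNorm_congr (I J : (Ideal S)⁰) (h : ClassGroup.mk0 I = ClassGroup.mk0 J) :
    preNorm R S I = preNorm R S J := by
  obtain ⟨x, y, hx, hy, h⟩ := ClassGroup.mk0_eq_mk0_iff.1 h
  refine ClassGroup.mk0_eq_mk0_iff.2 ⟨Algebra.intNorm R S x, Algebra.intNorm R S y,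
    by simpa using hx, by simpa using hy, ?_⟩
  rw [← Ideal.relNorm_singleton, ← Ideal.relNorm_singleton, ← map_mul, ← map_mul, h]

/-- norm on class groups -/
noncomputable def clNorm : ClassGroup S →* ClassGroup R where
  toFun x := preNorm R S (Function.surjInv ClassGroup.mk0_surjective x)
  map_one' := by
    rw [← map_one (preNorm R S)]
    apply preNorm_congr
    rw [Function.surjInv_eq ClassGroup.mk0_surjective, map_one]
  map_mul' x y := by
    rw [← map_mul (preNorm R S)]
    apply preNorm_congr
    rw [Function.surjInv_eq ClassGroup.mk0_surjective, map_mul,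
      Function.surjInv_eq ClassGroup.mk0_surjective, Function.surjInv_eq ClassGroup.mk0_surjective]

theorem clNorm_mk0 (I : Ideal S) (hI : I ∈ (Ideal S)⁰) :
    clNorm R S (ClassGroup.mk0 ⟨I, hI⟩) =
      ClassGroup.mk0 ⟨Ideal.relNorm R I, relNorm_mem_nzd R S hI⟩ :=
  preNorm_congr R S _ ⟨I, hI⟩ (Function.surjInv_eq _ _)

theorem clNorm_clMap (h : Function.Injective (algebraMap R S)) (x : ClassGroup R) :
    clNorm R S (clMap (algebraMap R S) h x) = x ^ Module.finrank R S := by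
  obtain ⟨⟨I, hI⟩, rfl⟩ := ClassGroup.mk0_surjective x
  rw [clMap_mk0, clNorm_mk0, ← map_pow]
  congr 2
  exact Ideal.relNorm_algebraMap S I

theorem clNorm_clNorm (T : Type*) [CommRing T] [IsDedekindDomain T] [Algebra R T] [Algebra T S]
    [IsScalarTower R T S] [Module.Finite R T] [Module.Finite T S]
    [Module.IsTorsionFree R T] [Module.IsTorsionFree T S] (x : ClassGroup S) :
    clNorm R T (clNorm T S x) = clNorm R S x := by
  obtain ⟨⟨I, hI⟩, rfl⟩ := ClassGroup.mk0_surjective x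
  rw [clNorm_mk0, clNorm_mk0, clNorm_mk0]
  congr 2
  exact Ideal.relNorm_relNorm R T I

attribute [local instance] FractionRing.liftAlgebra in
theorem map_relNorm_eq [Fintype (S ≃ₐ[R] S)]
    [IsGalois (FractionRing R) (FractionRing S)] (hc : Fintype.card (S ≃ₐ[R] S) = Module.finrank R S)
    (I : Ideal S) (hI : I ≠ ⊥) :
    (Ideal.relNorm R I).map (algebraMap R S) =
      ∏ σ : S ≃ₐ[R] S, I.map (σ : S →+* S) := by
  have hle : (Ideal.relNorm R I).map (algebraMap R S) ≤ ∏ σ : S ≃ₐ[R] S, I.map (σ : S →+* S) := by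
    rw [Ideal.map_relNorm, Ideal.span_le]
    rintro _ ⟨x, hx, rfl⟩
    simp only [Function.comp_apply, SetLike.mem_coe]
    rw [Algebra.algebraMap_intNorm_of_isGalois]
    convert! Ideal.prod_mem_prod (s := Finset.univ) (x := fun σ : S ≃ₐ[R] S => σ x)
      (I := fun σ : S ≃ₐ[R] S => I.map (σ : S →+* S)) (fun σ _ => Ideal.mem_map_of_mem _ hx)
  obtain ⟨Q, hQ⟩ := Ideal.dvd_iff_le.2 hle
  have h1 := congrArg (Ideal.relNorm R) hQ
  have h2 : ∀ σ : S ≃ₐ[R] S, Ideal.relNorm R (I.map (σ : S →+* S)) = Ideal.relNorm R I :=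
    fun σ => Ideal.relNorm_map_algEquiv σ I
  rw [Ideal.relNorm_algebraMap, map_mul, map_prod, Finset.prod_congr rfl fun σ _ => h2 σ,
    Finset.prod_const, Finset.card_univ, hc] at h1
  have hn : Ideal.relNorm R I ^ Module.finrank R S ≠ 0 :=
    pow_ne_zero _ (Ideal.relNorm_eq_bot_iff.not.2 hI)
  have h3 : Ideal.relNorm R Q = 1 := by
    apply mul_left_cancel₀ hn
    rw [← h1, mul_one]
  have h4 : Q = 1 := by
    rw [Ideal.one_eq_top, Ideal.eq_top_iff_one]
    have := Ideal.relNorm_le_comap R Q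
    rw [h3] at this
    have h5 := this (show (1 : R) ∈ (1 : Ideal R) by simp)
    simpa using h5
  rw [hQ, h4, mul_one]

end cl

section nf
variable (k L : Type*) [Field k] [Field L] [NumberField k] [NumberField L] [Algebra k L]

/-- automorphism action -/
noncomputable def autCl (σ : L ≃+* L) : ClassGroup (𝓞 L) →* ClassGroup (𝓞 L) :=
  clMap (RingOfIntegers.mapRingEquiv σ : 𝓞 L →+* 𝓞 L) (RingOfIntegers.mapRingEquiv σ).injective

theorem mapInj (σ : L ≃+* L) :
    Function.Injective (RingOfIntegers.mapRingEquiv σ : 𝓞 L →+* 𝓞 L) :=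
  (RingOfIntegers.mapRingEquiv σ).injective

theorem autCl_mk0 (σ : L ≃+* L) (I : Ideal (𝓞 L)) (hI : I ∈ (Ideal (𝓞 L))⁰) :
    autCl L σ (ClassGroup.mk0 ⟨I, hI⟩) = ClassGroup.mk0
      ⟨I.map (RingOfIntegers.mapRingEquiv σ : 𝓞 L →+* 𝓞 L), map_mem_nzd _ (mapInj L σ) hI⟩ :=
  clMap_mk0 _ (mapInj L σ) I hI

theorem autCl_one (x : ClassGroup (𝓞 L)) : autCl L (RingEquiv.refl L) x = x := 
  clMap_id _ _ (by ext; rfl) x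

theorem autCl_mul (σ τ : L ≃+* L) (x : ClassGroup (𝓞 L)) :
    autCl L (τ.trans σ) x = autCl L σ (autCl L τ x) :=
  (clMap_comp _ _ _ _ _ _ (by ext; rfl) x).symm

theorem algMap_inj : Function.Injective (algebraMap (𝓞 k) (𝓞 L)) :=
  FaithfulSMul.algebraMap_injective _ _

theorem finrank_int : Module.finrank (𝓞 k) (𝓞 L) = Module.finrank k L :=
  (IsFractionRing.finrank_eq (𝓞 k) k (𝓞 L) L).symm

theorem clMap_clNorm [IsGalois k L] (x : ClassGroup (𝓞 L)) :
    clMap (algebraMap (𝓞 k) (𝓞 L)) (algMap_inj k L) (clNorm (𝓞 k) (𝓞 L) x) =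
      ∏ σ : L ≃ₐ[k] L, autCl L σ.toRingEquiv x := by
  classical
  let : Algebra (FractionRing (𝓞 k)) (FractionRing (𝓞 L)) := FractionRing.liftAlgebra _ _
  have : IsGalois (FractionRing (𝓞 k)) (FractionRing (𝓞 L)) := by
    refine IsGalois.of_equiv_equiv (f := (FractionRing.algEquiv (𝓞 k) k).toRingEquiv.symm)
      (g := (FractionRing.algEquiv (𝓞 L) L).toRingEquiv.symm) <|
        RingHom.ext fun x ↦ IsFractionRing.algEquiv_commutes (FractionRing.algEquiv (𝓞 k) k).symm
          (FractionRing.algEquiv (𝓞 L) L).symm _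
  let : Fintype (𝓞 L ≃ₐ[𝓞 k] 𝓞 L) := Fintype.ofEquiv _ (galRestrict (𝓞 k) k L (𝓞 L)).toEquiv
  have hc : Fintype.card (𝓞 L ≃ₐ[𝓞 k] 𝓞 L) = Module.finrank (𝓞 k) (𝓞 L) := by
    rw [finrank_int, ← IsGalois.card_aut_eq_finrank, Nat.card_eq_fintype_card]
    exact Fintype.card_congr (galRestrict (𝓞 k) k L (𝓞 L)).toEquiv.symm
  obtain ⟨⟨I, hI⟩, rfl⟩ := ClassGroup.mk0_surjective x
  rw [clNorm_mk0, clMap_mk0]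
  simp only [autCl_mk0]
  rw [← map_prod]
  congr 1
  ext1
  simp only [Submonoid.coe_finsetProd]
  rw [map_relNorm_eq (𝓞 k) (𝓞 L) hc I (mem_nonZeroDivisors_iff_ne_zero.mp hI)]
  symm
  refine Fintype.prod_equiv (galRestrict (𝓞 k) k L (𝓞 L)).toEquiv _ _ fun σ => ?_
  congr 1
  ext y
  exact (algebraMap_galRestrict_apply (𝓞 k) σ y).symm

theorem aut_clMap (σ : L ≃ₐ[k] L) (y : ClassGroup (𝓞 k)) :
    autCl L σ.toRingEquiv (clMap (algebraMap (𝓞 k) (𝓞 L)) (algMap_inj k L) y) =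
      clMap (algebraMap (𝓞 k) (𝓞 L)) (algMap_inj k L) y := by
  refine clMap_comp _ _ _ _ _ _ ?_ y
  ext z
  exact (σ.commutes _).symm
end nf
end part2

section fin
variable (k L : Type) [Field k] [Field L] [NumberField k] [NumberField L] [Algebra k L]

theorem clNorm_aut (σ : L ≃ₐ[k] L) (x : ClassGroup (𝓞 L)) :
    clNorm (𝓞 k) (𝓞 L) (autCl L σ.toRingEquiv x) = clNorm (𝓞 k) (𝓞 L) x := by
  obtain ⟨⟨I, hI⟩, rfl⟩ := ClassGroup.mk0_surjective x
  rw [autCl_mk0, clNorm_mk0, clNorm_mk0]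
  congr 2
  rw [← Ideal.relNorm_map_algEquiv (R := 𝓞 k) (galRestrict (𝓞 k) k L (𝓞 L) σ) I]
  congr 1
  change I.map _ = I.map ((galRestrict (𝓞 k) k L (𝓞 L) σ : 𝓞 L →+* 𝓞 L))
  congr 1
  ext y
  exact (algebraMap_galRestrict_apply (𝓞 k) σ y).symm

theorem pow_cancel {X : Type*} [CommGroup X] {ℓ n u : ℕ} (hu : n * u % ℓ = 1 % ℓ) (x : X)
    (hx : x ^ ℓ = 1) : (x ^ n) ^ u = x := by
  rw [← pow_mul]
  conv_rhs => rw [← pow_one x]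
  exact pow_eq_pow_of_modEq hu hx

theorem exists_inv {ℓ n : ℕ} (hℓ : 1 < ℓ) (h : n.Coprime ℓ) : ∃ u, n * u % ℓ = 1 % ℓ := by
  obtain ⟨u, hu⟩ := Nat.exists_mul_mod_eq_one_of_coprime h hℓ
  exact ⟨u, by rw [hu.2, Nat.mod_eq_of_lt hℓ]⟩

variable [IsGalois k L]

theorem layer (K : IntermediateField k L) (ℓ : ℕ) (hℓ : 1 < ℓ)
    (hc : (Module.finrank K L).Coprime ℓ) :
    Nat.card ↥((clNorm (𝓞 k) (𝓞 K)).ker ⊓ lTors (ClassGroup (𝓞 K)) ℓ) =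
    Nat.card {x : ClassGroup (𝓞 L) // x ∈ (clNorm (𝓞 k) (𝓞 L)).ker ⊓ lTors (ClassGroup (𝓞 L)) ℓ ∧
      ∀ σ ∈ K.fixingSubgroup, autCl L σ.toRingEquiv x = x} := by
  obtain ⟨u, hu⟩ := exists_inv hℓ hc
  have hni : ∀ y, clNorm (𝓞 K) (𝓞 L) (clMap (algebraMap (𝓞 K) (𝓞 L)) (algMap_inj K L) y) =
      y ^ Module.finrank K L := by
    intro y
    rw [clNorm_clMap, finrank_int]
  refine Nat.card_congr (Equiv.ofBijective (fun y =>
    ⟨clMap (algebraMap (𝓞 K) (𝓞 L)) (algMap_inj K L) y.1, ⟨?_, ?_⟩, ?_⟩) ⟨?_, ?_⟩)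
  · change clNorm (𝓞 k) (𝓞 L) _ = 1
    rw [← clNorm_clNorm (𝓞 k) (𝓞 L) (𝓞 K), hni, map_pow,
      MonoidHom.mem_ker.1 y.2.1, one_pow]
  · change _ ^ ℓ = 1
    rw [← map_pow, show y.1 ^ ℓ = 1 from y.2.2, map_one]
  · intro σ hσ
    exact aut_clMap K L (K.fixingSubgroupEquiv ⟨σ, hσ⟩) y.1
  · intro y z h
    have h' := congrArg (clNorm (𝓞 K) (𝓞 L)) (congrArg Subtype.val h)
    simp only at h'
    rw [hni, hni] at h'
    apply Subtype.ext
    rw [← pow_cancel hu y.1 y.2.2, h', pow_cancel hu z.1 z.2.2]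
  · rintro ⟨x, ⟨hx1, hx2⟩, hx3⟩
    have hx1 : clNorm (𝓞 k) (𝓞 L) x = 1 := hx1
    have hx2 : x ^ ℓ = 1 := hx2
    refine ⟨⟨clNorm (𝓞 K) (𝓞 L) x ^ u, ?_, ?_⟩, Subtype.ext ?_⟩
    · change clNorm (𝓞 k) (𝓞 K) _ = 1
      rw [map_pow, clNorm_clNorm (𝓞 k) (𝓞 L) (𝓞 K), hx1,
        one_pow]
    · change _ ^ ℓ = 1
      rw [← map_pow, ← map_pow, ← pow_mul, mul_comm, pow_mul, hx2, one_pow, map_one]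
    · simp only [map_pow]
      rw [clMap_clNorm K L]
      have : ∀ σ : L ≃ₐ[K] L, autCl L σ.toRingEquiv x = x := fun σ =>
        hx3 (K.fixingSubgroupEquiv.symm σ).1 (K.fixingSubgroupEquiv.symm σ).2
      rw [Finset.prod_congr rfl fun σ _ => this σ, Finset.prod_const, Finset.card_univ,
        ← Nat.card_eq_fintype_card, IsGalois.card_aut_eq_finrank, pow_cancel hu x hx2]

/-- the relative class group torsion -/
noncomputable abbrev relD (ℓ : ℕ) : Subgroup (ClassGroup (𝓞 L)) :=
  (clNorm (𝓞 k) (𝓞 L)).ker ⊓ lTors (ClassGroup (𝓞 L)) ℓ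

theorem aut_mem (ℓ : ℕ) (σ : L ≃ₐ[k] L) (x : ClassGroup (𝓞 L)) (hx : x ∈ relD k L ℓ) :
    autCl L σ.toRingEquiv x ∈ relD k L ℓ := by
  refine ⟨?_, ?_⟩
  · change clNorm (𝓞 k) (𝓞 L) _ = 1
    rw [clNorm_aut]
    exact hx.1
  · change _ ^ ℓ = 1
    rw [← map_pow, show x ^ ℓ = 1 from hx.2, map_one]

/-- restricted action -/
noncomputable def rhoD (ℓ : ℕ) {V : Type} [AddCommGroup V] (e : (L ≃ₐ[k] L) ≃* Multiplicative V) :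
    Multiplicative V →* AddMonoid.End (Additive (relD k L ℓ)) where
  toFun v := MonoidHom.toAdditive (((autCl L (e.symm v).toRingEquiv).comp
    (relD k L ℓ).subtype).codRestrict (relD k L ℓ) (fun x => aut_mem k L ℓ _ _ x.2))
  map_one' := by
    refine AddMonoidHom.ext fun x => Additive.toMul.injective (Subtype.ext ?_)
    change autCl L (e.symm 1).toRingEquiv x.toMul.1 = x.toMul.1
    rw [map_one]
    exact autCl_one L _
  map_mul' v w := by
    refine AddMonoidHom.ext fun x => Additive.toMul.injective (Subtype.ext ?_)
    change autCl L (e.symm (v * w)).toRingEquiv x.toMul.1 =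
      autCl L (e.symm v).toRingEquiv (autCl L (e.symm w).toRingEquiv x.toMul.1)
    rw [map_mul]
    exact autCl_mul L _ _ _

theorem rhoD_fix (ℓ : ℕ) {V : Type} [AddCommGroup V] (e : (L ≃ₐ[k] L) ≃* Multiplicative V)
    (v : Multiplicative V) (x : Additive (relD k L ℓ)) : rhoD k L ℓ e v x = x ↔
      autCl L (e.symm v).toRingEquiv x.toMul.1 = x.toMul.1 :=
  ⟨fun h => congrArg (fun y : Additive (relD k L ℓ) => y.toMul.1) h,
    fun h => congrArg Additive.ofMul (Subtype.ext h)⟩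

/-- intermediate fields and submodules -/
noncomputable def fieldEquiv {p : ℕ} {V : Type} [AddCommGroup V] [Module (ZMod p) V]
    (e : (L ≃ₐ[k] L) ≃* Multiplicative V) : IntermediateField k L ≃ Submodule (ZMod p) V :=
  ((IsGalois.intermediateFieldEquivSubgroup (F := k) (E := L)).toEquiv.trans
    OrderDual.ofDual).trans (e.mapSubgroup.toEquiv.trans
      (Subgroup.toAddSubgroup'.toEquiv.trans (AddSubgroup.toZModSubmodule p).toEquiv))

theorem mem_fieldEquiv {p : ℕ} {V : Type} [AddCommGroup V] [Module (ZMod p) V]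
    (e : (L ≃ₐ[k] L) ≃* Multiplicative V) (K : IntermediateField k L) (v : V) :
    v ∈ fieldEquiv (p := p) k L e K ↔ e.symm (Multiplicative.ofAdd v) ∈ K.fixingSubgroup := by
  change Multiplicative.ofAdd v ∈ K.fixingSubgroup.map e.toMonoidHom ↔ _
  constructor
  · rintro ⟨σ, hσ, h⟩
    rw [← h]
    simpa using hσ
  · intro h
    exact ⟨_, h, by simp⟩

theorem card_fieldEquiv {p : ℕ} {V : Type} [AddCommGroup V] [Module (ZMod p) V]
    (e : (L ≃ₐ[k] L) ≃* Multiplicative V) (K : IntermediateField k L) :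
    Nat.card (fieldEquiv (p := p) k L e K) = Module.finrank K L := by
  rw [← IsGalois.card_fixingSubgroup_eq_finrank]
  refine Nat.card_congr ⟨fun v => ⟨e.symm (Multiplicative.ofAdd v.1), (mem_fieldEquiv k L e K _).1 v.2⟩,
    fun σ => ⟨(e σ.1).toAdd, (mem_fieldEquiv k L e K _).2 (by simp)⟩, ?_, ?_⟩
  · intro v; simp
  · intro σ; simp
end fin

/-- For `A = (ℤ/pℤ)^r` (`r ≥ 3`), `ℓ > 1` coprime to `p`, and an
`A`-extension `L/k` of number fields, the `ℓ`-torsion of the relative class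
group (the kernel of the ideal-norm map `Nm` on class groups) satisfies
`|Cl_{L/k}[ℓ]|^{(p^{r-1}-1)/(p-1)} = Π_j |Cl_{M_j/k}[ℓ]|`, the product over all
subfields `M_j` of `L` with `[M_j : k] = p²`. -/
theorem relative_class_group_second_layer_decomposition (p r ℓ : ℕ) (hp : p.Prime)
    (hr : 3 ≤ r) (hℓ : 1 < ℓ) (hcop : ℓ.Coprime p)
    (k L : Type) [Field k] [Field L] [NumberField k] [NumberField L]
    [Algebra k L] [IsGalois k L]
    (e : (L ≃ₐ[k] L) ≃* Multiplicative (Fin r → ZMod p))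
    (NmL : ClassGroup (𝓞 L) →* ClassGroup (𝓞 k))
    (hNmL : ∀ (I : Ideal (𝓞 L)) (hI : I ∈ nonZeroDivisors (Ideal (𝓞 L)))
      (hJ : Ideal.spanNorm (𝓞 k) I ∈ nonZeroDivisors (Ideal (𝓞 k))),
      NmL (ClassGroup.mk0 ⟨I, hI⟩) = ClassGroup.mk0 ⟨Ideal.spanNorm (𝓞 k) I, hJ⟩)
    (Nm : ∀ K : IntermediateField k L, ClassGroup (𝓞 K) →* ClassGroup (𝓞 k))
    (hNm : ∀ (K : IntermediateField k L) (I : Ideal (𝓞 K))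
      (hI : I ∈ nonZeroDivisors (Ideal (𝓞 K)))
      (hJ : Ideal.spanNorm (𝓞 k) I ∈ nonZeroDivisors (Ideal (𝓞 k))),
      Nm K (ClassGroup.mk0 ⟨I, hI⟩) =
        ClassGroup.mk0 ⟨Ideal.spanNorm (𝓞 k) I, hJ⟩) :
    Nat.card ↥(NmL.ker ⊓ lTors (ClassGroup (𝓞 L)) ℓ) ^ ((p ^ (r - 1) - 1) / (p - 1)) =
      ∏ᶠ (K : IntermediateField k L) (_ : Module.finrank k K = p ^ 2),
        Nat.card ↥((Nm K).ker ⊓ lTors (ClassGroup (𝓞 K)) ℓ) := by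
  have : Fact p.Prime := ⟨hp⟩
  have hNL : NmL = clNorm (𝓞 k) (𝓞 L) := by
    ext x
    obtain ⟨⟨I, hI⟩, rfl⟩ := ClassGroup.mk0_surjective x
    rw [clNorm_mk0]
    exact hNmL I hI (relNorm_mem_nzd (𝓞 k) (𝓞 L) hI)
  have hNK : ∀ K, Nm K = clNorm (𝓞 k) (𝓞 K) := by
    intro K
    ext x
    obtain ⟨⟨I, hI⟩, rfl⟩ := ClassGroup.mk0_surjective x
    rw [clNorm_mk0]
    exact hNm K I hI (relNorm_mem_nzd (𝓞 k) (𝓞 K) hI)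
  subst hNL
  obtain rfl : Nm = fun K : IntermediateField k L => clNorm (𝓞 k) (𝓞 K) := funext hNK
  have hV : Module.finrank (ZMod p) (Fin r → ZMod p) = (r - 1) + 1 := by
    rw [Module.finrank_fin_fun]; omega
  have hcard : Module.finrank k L = p ^ r := by
    rw [← IsGalois.card_aut_eq_finrank, Nat.card_congr e.toEquiv]
    simp
  have hcp : ∀ n, (p ^ n).Coprime ℓ := fun n => (hcop.symm).pow_left n
  obtain ⟨u, hu⟩ := exists_inv hℓ (hcp (r - 1))
  obtain ⟨u', hu'⟩ := exists_inv hℓ (hcp r)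
  have htor : ∀ x : Additive (relD k L ℓ), x.toMul.1 ^ ℓ = 1 := fun x => x.toMul.2.2
  have key := card_second (p := p) (rhoD k L ℓ e) ?_ hV u ?_
  · change Nat.card (Additive (relD k L ℓ)) ^ _ = _
    rw [key]
    have h1 : ∀ K : IntermediateField k L, Module.finrank k K = p ^ 2 ↔
        Module.finrank (ZMod p) (fieldEquiv (p := p) k L e K) + 2 =
          Module.finrank (ZMod p) (Fin r → ZMod p) := by
      intro K
      have h2 := card_fieldEquiv (p := p) k L e K
      rw [Module.natCard_eq_pow_finrank (K := ZMod p), Nat.card_zmod] at h2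
      have h3 := Module.finrank_mul_finrank k K L
      rw [hcard, ← h2] at h3
      rw [Module.finrank_fin_fun]
      constructor
      · intro h
        rw [h, ← pow_add] at h3
        have := Nat.pow_right_injective hp.two_le h3
        omega
      · intro h
        generalize Module.finrank (ZMod p) (fieldEquiv (p := p) k L e K) = f at h h3
        have h4 : p ^ r = p ^ 2 * p ^ f := by rw [← h, add_comm, pow_add]
        rw [h4] at h3
        exact Nat.eq_of_mul_eq_mul_right (pow_pos hp.pos _) h3
    rw [← finprod_eq_prod_of_fintype, ← finprod_subtype_eq_finprod_cond]
    symm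
    refine finprod_eq_of_bijective ((fieldEquiv (p := p) k L e).subtypeEquiv h1)
      (Equiv.bijective _) ?_
    rintro ⟨K, hK⟩
    have hco : (Module.finrank K L).Coprime ℓ := by
      rw [← card_fieldEquiv (p := p) k L e K, Module.natCard_eq_pow_finrank (K := ZMod p),
        Nat.card_zmod]
      exact hcp _
    rw [layer k L K ℓ hℓ hco]
    symm
    refine Nat.card_congr ⟨fun x => ⟨x.1.toMul.1, x.1.toMul.2, fun σ hσ => ?_⟩,
      fun x => ⟨Additive.ofMul ⟨x.1, x.2.1⟩, fun v hv => ?_⟩, fun _ => rfl, fun _ => rfl⟩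
    · have := (rhoD_fix k L ℓ e _ _).1 (x.2 (e σ).toAdd
        ((mem_fieldEquiv k L e K _).2 (by simpa using hσ)))
      simpa using this
    · exact (rhoD_fix k L ℓ e _ _).2 (x.2.2 _ ((mem_fieldEquiv k L e K _).1 hv))
  · intro x hx
    have h1 : ∀ σ : L ≃ₐ[k] L, autCl L σ.toRingEquiv x.toMul.1 = x.toMul.1 := by
      intro σ
      have := (rhoD_fix k L ℓ e _ _).1 (hx (e σ).toAdd trivial)
      simpa using this
    have h2 := clMap_clNorm k L x.toMul.1
    rw [Finset.prod_congr rfl fun σ _ => h1 σ, Finset.prod_const, Finset.card_univ,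
        ← Nat.card_eq_fintype_card, IsGalois.card_aut_eq_finrank, hcard,
        show clNorm (𝓞 k) (𝓞 L) x.toMul.1 = 1 from x.toMul.2.1, map_one] at h2
    have h3 := pow_cancel hu' x.toMul.1 (htor x)
    rw [← h2, one_pow] at h3
    exact congrArg Additive.ofMul (Subtype.ext h3.symm : x.toMul = 1)
  · intro x
    refine congrArg Additive.ofMul (Subtype.ext ?_ : x.toMul ^ (u * p ^ (r - 1)) = x.toMul)
    rw [mul_comm, pow_mul]
    exact pow_cancel hu x.toMul.1 (htor x)
end
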